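/- Let E : P_{μ₀}(ℝ^d) → ℝ ∪ {∞} be proper, coercive, lower semicontinuous, and λ-convex along generalized geodesics with λ ≥ 0, and fix τ > 0. Then for all μ, ν in the W₂-closure of D(E), the proximal map is contracting in Λ_τ: Λ_τ(μ_τ, ν_τ) ≤ Λ_τ(μ, ν), where μ_τ, ν_τ are the proximal points of μ, ν. -/

import Mathlib

/-!
Adding two discrete evolution variational inequalities (`discrete_evi`), one for `μ_τ` tested
against `ν_τ` and one for `ν_τ` tested against `μ`, the mixed distance `W₂(μ, ν_τ)` cancels.
Averaging with the same estimate for `μ` and `ν` exchanged gives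
`W₂²(μ_τ, ν_τ) - W₂²(μ, ν) ≤ τ (E μ - E μ_τ) + τ (E ν - E ν_τ) - W₂²(μ, μ_τ) - W₂²(ν, ν_τ)`.
Convexity bounds `E μ - E μ_τ` by `|∇E|(μ) W₂(μ, μ_τ)` (`sub_le_slopeW`), so by Young's inequality
`τ (E μ - E μ_τ) ≤ (τ²/2) |∇E|(μ)² + W₂²(μ, μ_τ) / 2`, and the half of `W₂²(μ, μ_τ)` that is left
over pays for `(τ²/2) |∇E|(μ_τ)²`, since `|∇E|(μ_τ) ≤ W₂(μ, μ_τ) / τ` (`slopeW_proximal_le`).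
If `E μ = ∞`, then `|∇E|(μ) = ∞` because `μ` is a limit of measures of finite energy
(`slopeW_eq_top`), and there is nothing to prove.

All transport estimates rest on `exists_curve`: along the curve of a generalized geodesic both `E`
and the squared distance to the base point satisfy convexity inequalities. It also yields the
triangle inequality for `W₂` on `P_{μ₀}`. Gluing of plans is needed only to see that `W₂` is finite
on `P_{μ₀}` and that these curves stay there.
-/

open MeasureTheory Filter ENNReal

noncomputable section

/-- Euclidean space `ℝ^d`. -/
abbrev Euc (d : ℕ) := EuclideanSpace ℝ (Fin d)

/-- The squared 2-Wasserstein distance, as an extended nonnegative real: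
the infimum over couplings `γ` (Borel probability measures on `ℝ^d × ℝ^d`
with first marginal `μ` and second marginal `ν`) of `∫ |x-y|² dγ`. -/
noncomputable def W2sq {d : ℕ} (μ ν : Measure (Euc d)) : ℝ≥0∞ :=
  ⨅ (γ : Measure (Euc d × Euc d)) (_ : γ.map Prod.fst = μ ∧ γ.map Prod.snd = ν),
    ∫⁻ q, ENNReal.ofReal (‖q.1 - q.2‖ ^ 2) ∂γ

/-- The 2-Wasserstein distance (a real number; degenerate when `W2sq = ∞`). -/
noncomputable def W2 {d : ℕ} (μ ν : Measure (Euc d)) : ℝ :=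
  Real.sqrt (W2sq μ ν).toReal

/-- `γ` is an optimal transport plan from `μ` to `ν`. -/
def IsOptimalPlan {d : ℕ} (μ ν : Measure (Euc d)) (γ : Measure (Euc d × Euc d)) : Prop :=
  γ.map Prod.fst = μ ∧ γ.map Prod.snd = ν ∧
    ∫⁻ q, ENNReal.ofReal (‖q.1 - q.2‖ ^ 2) ∂γ = W2sq μ ν

/-- `P_{μ₀}(ℝ^d)`: Borel probability measures at finite `W₂`-distance from `μ₀`. -/
def Pfin {d : ℕ} (μ₀ : Measure (Euc d)) : Set (Measure (Euc d)) :=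
  {μ | IsProbabilityMeasure μ ∧ W2sq μ₀ μ ≠ ⊤}

/-- `E` is proper: its domain inside `P_{μ₀}` is nonempty (and `E` never takes the value `-∞`,
i.e. it maps into `ℝ ∪ {∞}`). -/
def ProperFn {d : ℕ} (μ₀ : Measure (Euc d)) (F : Measure (Euc d) → EReal) : Prop :=
  (∀ ρ, F ρ ≠ ⊥) ∧ ∃ ρ ∈ Pfin μ₀, F ρ ≠ ⊤

/-- The domain `D(E)` of `E`. -/
def Dom {d : ℕ} (μ₀ : Measure (Euc d)) (F : Measure (Euc d) → EReal) : Set (Measure (Euc d)) :=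
  {μ ∈ Pfin μ₀ | F μ ≠ ⊤}

/-- `E` is coercive: for some `τ₀ > 0`,
`inf_ν { W₂²(μ₀,ν)/(2τ₀) + E(ν) } > -∞`. -/
def CoerciveFn {d : ℕ} (μ₀ : Measure (Euc d)) (F : Measure (Euc d) → EReal) : Prop :=
  ∃ τ₀ : ℝ, 0 < τ₀ ∧
    ⊥ < ⨅ ν ∈ Pfin μ₀, (((W2 μ₀ ν) ^ 2 / (2 * τ₀) : ℝ) : EReal) + F ν

/-- `E` is sequentially lower semicontinuous with respect to `W₂`-convergence. -/
def W2LSC {d : ℕ} (μ₀ : Measure (Euc d)) (F : Measure (Euc d) → EReal) : Prop :=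
  ∀ (s : ℕ → Measure (Euc d)) (μ : Measure (Euc d)),
    (∀ n, s n ∈ Pfin μ₀) → μ ∈ Pfin μ₀ →
    Tendsto (fun n => W2 (s n) μ) atTop (nhds 0) →
    F μ ≤ liminf (fun n => F (s n)) atTop

/-- `E` is `λ`-convex along generalized geodesics: for all `μ₁, μ₂, μ₃ ∈ P_{μ₀}` there
is a 3-plan whose (1,2)- and (1,3)-marginals are optimal, along whose induced interpolating
curve the `λ`-convexity inequality (with the full transport cost `∫|x₂-x₃|² d𝛍`) holds. -/
def GenGeoConvex {d : ℕ} (μ₀ : Measure (Euc d)) (lam : ℝ)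
    (F : Measure (Euc d) → EReal) : Prop :=
  ∀ μ₁ ∈ Pfin μ₀, ∀ μ₂ ∈ Pfin μ₀, ∀ μ₃ ∈ Pfin μ₀,
    ∃ pl : Measure (Euc d × Euc d × Euc d),
      IsOptimalPlan μ₁ μ₂ (pl.map (fun q => (q.1, q.2.1))) ∧
      IsOptimalPlan μ₁ μ₃ (pl.map (fun q => (q.1, q.2.2))) ∧
      ∀ α ∈ Set.Icc (0:ℝ) 1,
        F (pl.map (fun q => (1 - α) • q.2.1 + α • q.2.2)) ≤
          ((1 - α : ℝ) : EReal) * F μ₂ + (α : EReal) * F μ₃ -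
            ((α * (1 - α) * (lam / 2) *
              (∫⁻ q, ENNReal.ofReal (‖q.2.1 - q.2.2‖ ^ 2) ∂pl).toReal : ℝ) : EReal)

/-- The `W₂`-closure (within `P_{μ₀}`) of a set of measures. -/
def W2Closure {d : ℕ} (μ₀ : Measure (Euc d)) (S : Set (Measure (Euc d))) :
    Set (Measure (Euc d)) :=
  {μ ∈ Pfin μ₀ | ∃ s : ℕ → Measure (Euc d), (∀ n, s n ∈ S) ∧
    Tendsto (fun n => W2 (s n) μ) atTop (nhds 0)}

/-- The Moreau–Yosida regularization `E_τ`. -/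
noncomputable def MY {d : ℕ} (μ₀ : Measure (Euc d)) (F : Measure (Euc d) → EReal)
    (τ : ℝ) (μ : Measure (Euc d)) : EReal :=
  ⨅ ν ∈ Pfin μ₀, (((W2 μ ν) ^ 2 / (2 * τ) : ℝ) : EReal) + F ν

/-- `ν` is a proximal point of `μ` for `E` with step `τ`: it minimizes
`ρ ↦ W₂²(μ,ρ)/(2τ) + E(ρ)` over `P_{μ₀}`. -/
def IsProximal {d : ℕ} (μ₀ : Measure (Euc d)) (F : Measure (Euc d) → EReal)
    (τ : ℝ) (μ ν : Measure (Euc d)) : Prop :=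
  ν ∈ Pfin μ₀ ∧ ∀ ρ ∈ Pfin μ₀,
    (((W2 μ ν) ^ 2 / (2 * τ) : ℝ) : EReal) + F ν ≤
      (((W2 μ ρ) ^ 2 / (2 * τ) : ℝ) : EReal) + F ρ

/-- The positive part of an extended real, as an element of `[0,∞]`. -/
noncomputable def ERealPos (x : EReal) : ℝ≥0∞ :=
  if x = ⊤ then ⊤ else ENNReal.ofReal x.toReal

/-- The filter of `W₂`-punctured neighborhoods of `μ` within `P_{μ₀}`. -/
def W2nhdsWithin {d : ℕ} (μ₀ μ : Measure (Euc d)) : Filter (Measure (Euc d)) :=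
  ⨅ ε ∈ Set.Ioi (0:ℝ), Filter.principal {ν | ν ∈ Pfin μ₀ ∧ ν ≠ μ ∧ W2 μ ν < ε}

/-- The metric slope `|∇_W F|(μ) = limsup_{ν → μ} (F(μ)-F(ν))⁺ / W₂(μ,ν)`,
valued in `[0,∞]`. -/
noncomputable def slopeW {d : ℕ} (μ₀ : Measure (Euc d)) (F : Measure (Euc d) → EReal)
    (μ : Measure (Euc d)) : ℝ≥0∞ :=
  Filter.limsup (fun ν => ERealPos (F μ - F ν) / ENNReal.ofReal (W2 μ ν))
    (W2nhdsWithin μ₀ μ)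

/-- `Λ_τ(μ,ν) = W₂²(μ,ν) + (τ²/2)|∇_W E|(μ)² + (τ²/2)|∇_W E|(ν)²`, valued in `[0,∞]`. -/
noncomputable def LamT {d : ℕ} (μ₀ : Measure (Euc d)) (F : Measure (Euc d) → EReal)
    (τ : ℝ) (μ ν : Measure (Euc d)) : ℝ≥0∞ :=
  W2sq μ ν + ENNReal.ofReal (τ ^ 2 / 2) * (slopeW μ₀ F μ) ^ 2
    + ENNReal.ofReal (τ ^ 2 / 2) * (slopeW μ₀ F ν) ^ 2

section helpers
variable {d : ℕ}

/-! ### Couplings and finiteness of the Wasserstein distance -/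

/-- Gluing: two plans with the same first marginal are the (1,2)- and (1,3)-marginals of a common
3-plan, namely the one making the two conditional laws independent. -/
theorem exists_glue (γ γ' : Measure (Euc d × Euc d)) [IsProbabilityMeasure γ]
    [IsProbabilityMeasure γ'] (h : γ.map Prod.fst = γ'.map Prod.fst) :
    ∃ η : Measure (Euc d × Euc d × Euc d),
      η.map (fun q => (q.1, q.2.1)) = γ ∧ η.map (fun q => (q.1, q.2.2)) = γ' := by
  have h' : γ'.fst = γ.fst := h.symm
  refine ⟨γ.fst.compProd (ProbabilityTheory.Kernel.prod γ.condKernel γ'.condKernel), ?_, ?_⟩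
  · have e : (fun q : Euc d × Euc d × Euc d => (q.1, q.2.1)) = Prod.map id Prod.fst := rfl
    rw [e, ← Measure.compProd_map measurable_fst, ← ProbabilityTheory.Kernel.fst_eq,
      ProbabilityTheory.Kernel.fst_prod, Measure.disintegrate]
  · have e : (fun q : Euc d × Euc d × Euc d => (q.1, q.2.2)) = Prod.map id Prod.snd := rfl
    rw [e, ← Measure.compProd_map measurable_snd, ← ProbabilityTheory.Kernel.snd_eq,
      ProbabilityTheory.Kernel.snd_prod, ← h', Measure.disintegrate]

theorem W2sq_map_le {Ω : Type*} [MeasurableSpace Ω] (η : Measure Ω) {f g : Ω → Euc d}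
    (hf : Measurable f) (hg : Measurable g) :
    W2sq (η.map f) (η.map g) ≤ ∫⁻ q, ENNReal.ofReal (‖f q - g q‖ ^ 2) ∂η := by
  have hm : Measurable fun q => (f q, g q) := hf.prodMk hg
  refine (iInf₂_le (η.map fun q => (f q, g q)) ⟨?_, ?_⟩).trans_eq ?_
  · rw [lintegral_map (by fun_prop) hm]
  · rw [Measure.map_map measurable_fst hm]; rfl
  · rw [Measure.map_map measurable_snd hm]; rfl

theorem W2sq_le_of_map {Ω : Type*} [MeasurableSpace Ω] {η : Measure Ω} {f g : Ω → Euc d}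
    {μ ν : Measure (Euc d)} (hf : Measurable f) (hg : Measurable g) (h : η.map f = μ)
    (h' : η.map g = ν) : W2sq μ ν ≤ ∫⁻ q, ENNReal.ofReal (‖f q - g q‖ ^ 2) ∂η :=
  h ▸ h' ▸ W2sq_map_le η hf hg

theorem W2sq_comm (μ ν : Measure (Euc d)) : W2sq μ ν = W2sq ν μ := by
  have key : ∀ μ ν : Measure (Euc d), W2sq μ ν ≤ W2sq ν μ := by
    intro μ ν
    refine le_iInf₂ fun γ hγ => ?_
    rw [← hγ.1, ← hγ.2]
    refine (W2sq_map_le γ measurable_snd measurable_fst).trans_eq ?_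
    simp_rw [norm_sub_rev]
  exact le_antisymm (key _ _) (key _ _)

theorem W2sq_self (μ : Measure (Euc d)) : W2sq μ μ = 0 := by
  have := W2sq_map_le μ (f := id) (g := id) measurable_id measurable_id
  simpa using this

theorem W2_self (μ : Measure (Euc d)) : W2 μ μ = 0 := by simp [W2, W2sq_self]

theorem W2_comm (μ ν : Measure (Euc d)) : W2 μ ν = W2 ν μ := by rw [W2, W2sq_comm]; rfl

theorem W2_nonneg (μ ν : Measure (Euc d)) : 0 ≤ W2 μ ν := Real.sqrt_nonneg _

theorem W2_sq (μ ν : Measure (Euc d)) : W2 μ ν ^ 2 = (W2sq μ ν).toReal :=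
  Real.sq_sqrt ENNReal.toReal_nonneg

theorem isProb_of_map {Ω Ω' : Type*} [MeasurableSpace Ω] [MeasurableSpace Ω'] {η : Measure Ω}
    {f : Ω → Ω'} {μ : Measure Ω'} [IsProbabilityMeasure μ] (h : η.map f = μ) :
    IsProbabilityMeasure η := by
  subst h
  exact Measure.isProbabilityMeasure_of_map f

/-- Finiteness of `W₂` propagates through a common point, by gluing and
`|y - z|² ≤ 2|x - y|² + 2|x - z|²`. -/
theorem W2sq_ne_top_of_common {μ₁ μ₂ μ₃ : Measure (Euc d)} [IsProbabilityMeasure μ₁]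
    (h₂ : W2sq μ₁ μ₂ ≠ ⊤) (h₃ : W2sq μ₁ μ₃ ≠ ⊤) : W2sq μ₂ μ₃ ≠ ⊤ := by
  have ex : ∀ {ν : Measure (Euc d)}, W2sq μ₁ ν ≠ ⊤ → ∃ γ : Measure (Euc d × Euc d),
      (γ.map Prod.fst = μ₁ ∧ γ.map Prod.snd = ν) ∧
        ∫⁻ q, ENNReal.ofReal (‖q.1 - q.2‖ ^ 2) ∂γ < ⊤ := by
    intro ν h
    have := lt_top_iff_ne_top.2 h
    simp only [W2sq, iInf_lt_iff] at this
    obtain ⟨γ, hγ, h⟩ := this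
    exact ⟨γ, hγ, h⟩
  obtain ⟨γ, hγ, hc⟩ := ex h₂
  obtain ⟨γ', hγ', hc'⟩ := ex h₃
  have := isProb_of_map hγ.1
  have := isProb_of_map hγ'.1
  obtain ⟨η, h1, h2⟩ := exists_glue γ γ' (hγ.1.trans hγ'.1.symm)
  have e2 : η.map (fun q => q.2.1) = μ₂ := by
    rw [← hγ.2, ← h1, Measure.map_map (by fun_prop) (by fun_prop)]; rfl
  have e3 : η.map (fun q => q.2.2) = μ₃ := by
    rw [← hγ'.2, ← h2, Measure.map_map (by fun_prop) (by fun_prop)]; rfl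
  rw [← h1, lintegral_map (by fun_prop) (by fun_prop)] at hc
  rw [← h2, lintegral_map (by fun_prop) (by fun_prop)] at hc'
  refine ne_top_of_le_ne_top ?_
    ((W2sq_le_of_map (by fun_prop) (by fun_prop) e2 e3).trans
      (lintegral_mono (g := fun q => 2 * ENNReal.ofReal (‖q.1 - q.2.1‖ ^ 2)
        + 2 * ENNReal.ofReal (‖q.1 - q.2.2‖ ^ 2)) ?_))
  · rw [lintegral_add_left (by fun_prop), lintegral_const_mul _ (by fun_prop),
      lintegral_const_mul _ (by fun_prop)]
    exact (ENNReal.add_lt_top.2 ⟨ENNReal.mul_lt_top (by simp) hc,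
      ENNReal.mul_lt_top (by simp) hc'⟩).ne
  · intro q
    have h : ‖q.2.1 - q.2.2‖ ≤ ‖q.1 - q.2.1‖ + ‖q.1 - q.2.2‖ := by
      calc ‖q.2.1 - q.2.2‖ = ‖(q.1 - q.2.2) - (q.1 - q.2.1)‖ := by congr 1; abel
        _ ≤ _ := (norm_sub_le _ _).trans_eq (add_comm _ _)
    have h' : ‖q.2.1 - q.2.2‖ ^ 2 ≤ 2 * ‖q.1 - q.2.1‖ ^ 2 + 2 * ‖q.1 - q.2.2‖ ^ 2 := by
      nlinarith [norm_nonneg (q.2.1 - q.2.2), sq_nonneg (‖q.1 - q.2.1‖ - ‖q.1 - q.2.2‖)]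
    refine (ENNReal.ofReal_le_ofReal h').trans_eq ?_
    rw [ENNReal.ofReal_add (by positivity) (by positivity), ENNReal.ofReal_mul (by norm_num),
      ENNReal.ofReal_mul (by norm_num)]
    simp

variable {μ₀ : Measure (Euc d)} {F : Measure (Euc d) → EReal} {lam τ : ℝ}

theorem W2sq_ne_top (hμ₀ : IsProbabilityMeasure μ₀) {μ ν : Measure (Euc d)} (hμ : μ ∈ Pfin μ₀)
    (hν : ν ∈ Pfin μ₀) : W2sq μ ν ≠ ⊤ :=
  W2sq_ne_top_of_common hμ.2 hν.2

/-! ### Generalized geodesics and the triangle inequality -/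

theorem norm_sq_interp (x y z : Euc d) (α : ℝ) :
    ‖x - ((1 - α) • y + α • z)‖ ^ 2 + α * (1 - α) * ‖y - z‖ ^ 2
      = (1 - α) * ‖x - y‖ ^ 2 + α * ‖x - z‖ ^ 2 := by
  have e : x - ((1 - α) • y + α • z) = (1 - α) • (x - y) + α • (x - z) := by module
  have e' : y - z = (x - z) - (x - y) := by abel
  rw [e, e', norm_add_sq_real, norm_sub_sq_real, norm_smul, norm_smul, mul_pow, mul_pow,
    real_inner_smul_left, real_inner_smul_right, Real.norm_eq_abs, Real.norm_eq_abs, sq_abs,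
    sq_abs, real_inner_comm (x - y) (x - z)]
  ring

/-- The interpolating curve of the 3-plan given by generalized geodesic convexity. Besides
the convexity inequality for `F`, the squared distance to the base point `μ₁` lies below its chord
by at least `α(1-α) W₂²(μ₂,μ₃)`, from the pointwise identity `norm_sq_interp`. -/
theorem exists_curve (hμ₀ : IsProbabilityMeasure μ₀) (hlam : 0 ≤ lam)
    (hconv : GenGeoConvex μ₀ lam F) {μ₁ μ₂ μ₃ : Measure (Euc d)} (h₁ : μ₁ ∈ Pfin μ₀)
    (h₂ : μ₂ ∈ Pfin μ₀) (h₃ : μ₃ ∈ Pfin μ₀) :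
    ∃ m : ℝ → Measure (Euc d), ∀ α ∈ Set.Icc (0 : ℝ) 1, m α ∈ Pfin μ₀ ∧
      W2 μ₁ (m α) ^ 2 ≤ (1 - α) * W2 μ₁ μ₂ ^ 2 + α * W2 μ₁ μ₃ ^ 2
        - α * (1 - α) * W2 μ₂ μ₃ ^ 2 ∧
      ∀ a b : ℝ, F μ₂ = a → F μ₃ = b → F (m α) ≤ (((1 - α) * a + α * b : ℝ) : EReal) := by
  obtain ⟨pl, p2, p3, hF⟩ := hconv μ₁ h₁ μ₂ h₂ μ₃ h₃
  refine ⟨fun α => pl.map (fun q => (1 - α) • q.2.1 + α • q.2.2), fun α hα => ?_⟩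
  have hα' : 0 ≤ 1 - α := by linarith [hα.2]
  have hα0 := hα.1
  have := h₁.1
  have e1 : pl.map (fun q => q.1) = μ₁ := by
    rw [← p2.1, Measure.map_map (by fun_prop) (by fun_prop)]; rfl
  have e2 : pl.map (fun q => q.2.1) = μ₂ := by
    rw [← p2.2.1, Measure.map_map (by fun_prop) (by fun_prop)]; rfl
  have e3 : pl.map (fun q => q.2.2) = μ₃ := by
    rw [← p3.2.1, Measure.map_map (by fun_prop) (by fun_prop)]; rfl
  have := isProb_of_map e1
  have c2 : ∫⁻ q, ENNReal.ofReal (‖q.1 - q.2.1‖ ^ 2) ∂pl = W2sq μ₁ μ₂ := by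
    rw [← p2.2.2, lintegral_map (by fun_prop) (by fun_prop)]
  have c3 : ∫⁻ q, ENNReal.ofReal (‖q.1 - q.2.2‖ ^ 2) ∂pl = W2sq μ₁ μ₃ := by
    rw [← p3.2.2, lintegral_map (by fun_prop) (by fun_prop)]
  have i1 : W2sq μ₁ (pl.map fun q => (1 - α) • q.2.1 + α • q.2.2) ≤
      ∫⁻ q, ENNReal.ofReal (‖q.1 - ((1 - α) • q.2.1 + α • q.2.2)‖ ^ 2) ∂pl :=
    W2sq_le_of_map (by fun_prop) (by fun_prop) e1 rfl
  have i2 : W2sq μ₂ μ₃ ≤ ∫⁻ q, ENNReal.ofReal (‖q.2.1 - q.2.2‖ ^ 2) ∂pl :=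
    W2sq_le_of_map (by fun_prop) (by fun_prop) e2 e3
  have main : W2sq μ₁ (pl.map fun q => (1 - α) • q.2.1 + α • q.2.2)
      + ENNReal.ofReal (α * (1 - α)) * W2sq μ₂ μ₃ ≤
      ENNReal.ofReal (1 - α) * W2sq μ₁ μ₂ + ENNReal.ofReal α * W2sq μ₁ μ₃ := by
    refine (add_le_add i1 (mul_le_mul_right i2 _)).trans_eq ?_
    rw [← c2, ← c3, ← lintegral_const_mul _ (by fun_prop), ← lintegral_const_mul _ (by fun_prop),
      ← lintegral_const_mul _ (by fun_prop), ← lintegral_add_left (by fun_prop),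
      ← lintegral_add_left (by fun_prop)]
    refine lintegral_congr fun q => ?_
    rw [← ENNReal.ofReal_mul (by positivity), ← ENNReal.ofReal_mul hα',
      ← ENNReal.ofReal_mul hα0, ← ENNReal.ofReal_add (by positivity) (by positivity),
      ← ENNReal.ofReal_add (by positivity) (by positivity), norm_sq_interp]
  have t2 := W2sq_ne_top hμ₀ h₁ h₂
  have t3 := W2sq_ne_top hμ₀ h₁ h₃
  have t23 := W2sq_ne_top hμ₀ h₂ h₃
  have tR : ENNReal.ofReal (1 - α) * W2sq μ₁ μ₂ + ENNReal.ofReal α * W2sq μ₁ μ₃ ≠ ⊤ := by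
    finiteness
  have tm : W2sq μ₁ (pl.map fun q => (1 - α) • q.2.1 + α • q.2.2) ≠ ⊤ :=
    ne_top_of_le_ne_top tR (le_self_add.trans main)
  refine ⟨⟨Measure.isProbabilityMeasure_map (by fun_prop), ?_⟩, ?_, ?_⟩
  · exact W2sq_ne_top_of_common (W2sq_comm μ₀ μ₁ ▸ h₁.2) tm
  · have := ENNReal.toReal_mono tR main
    rw [ENNReal.toReal_add tm (by finiteness), ENNReal.toReal_add (by finiteness) (by finiteness),
      ENNReal.toReal_mul, ENNReal.toReal_mul, ENNReal.toReal_mul,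
      ENNReal.toReal_ofReal (by positivity), ENNReal.toReal_ofReal hα',
      ENNReal.toReal_ofReal hα0] at this
    rw [W2_sq, W2_sq, W2_sq, W2_sq]
    linarith
  · intro a b ha hb
    refine (hF α hα).trans ?_
    rw [ha, hb]
    norm_cast
    have : 0 ≤ α * (1 - α) * (lam / 2) *
        (∫⁻ q, ENNReal.ofReal (‖q.2.1 - q.2.2‖ ^ 2) ∂pl).toReal := by positivity
    linarith

/-- Triangle inequality: positivity of the squared distance to the base point along the curve of
`exists_curve` says `α(1-α) W₂²(μ₂,μ₃) ≤ (1-α) W₂²(μ₁,μ₂) + α W₂²(μ₁,μ₃)`, and the optimal `α` is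
proportional to `W₂(μ₁,μ₂)`. -/
theorem W2_triangle (hμ₀ : IsProbabilityMeasure μ₀) (hlam : 0 ≤ lam)
    (hconv : GenGeoConvex μ₀ lam F) {μ₁ μ₂ μ₃ : Measure (Euc d)} (h₁ : μ₁ ∈ Pfin μ₀)
    (h₂ : μ₂ ∈ Pfin μ₀) (h₃ : μ₃ ∈ Pfin μ₀) : W2 μ₂ μ₃ ≤ W2 μ₁ μ₂ + W2 μ₁ μ₃ := by
  obtain ⟨m, hm⟩ := exists_curve hμ₀ hlam hconv h₁ h₂ h₃
  have ha := W2_nonneg μ₁ μ₂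
  have hb := W2_nonneg μ₁ μ₃
  generalize W2 μ₁ μ₂ = a at *
  generalize W2 μ₁ μ₃ = b at *
  generalize W2 μ₂ μ₃ = S at *
  refine le_of_forall_pos_le_add fun ε hε => ?_
  -- shifting `a` and `b` by `ε / 2` keeps the optimal weight away from `0` and `1`
  obtain ⟨A, hA⟩ : ∃ A, A = a + ε / 2 := ⟨_, rfl⟩
  obtain ⟨B, hB⟩ : ∃ B, B = b + ε / 2 := ⟨_, rfl⟩
  have hA0 : 0 < A := by linarith
  have hB0 : 0 < B := by linarith
  obtain ⟨-, h, -⟩ := hm (A / (A + B)) ⟨by positivity, by rw [div_le_one (by positivity)]; linarith⟩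
  have h' := (sq_nonneg _).trans h
  have e : 1 - A / (A + B) = B / (A + B) := by field_simp; ring
  rw [e] at h'
  have h2 : A * B * S ^ 2 ≤ (B * a ^ 2 + A * b ^ 2) * (A + B) := by
    field_simp at h'
    nlinarith
  have ha2 : a ^ 2 ≤ A ^ 2 := by gcongr; linarith
  have hb2 : b ^ 2 ≤ B ^ 2 := by gcongr; linarith
  have h3 : A * B * S ^ 2 ≤ A * B * (A + B) ^ 2 := by
    calc _ ≤ (B * a ^ 2 + A * b ^ 2) * (A + B) := h2
      _ ≤ (B * A ^ 2 + A * B ^ 2) * (A + B) := by gcongr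
      _ = _ := by ring
  have h4 : |S| ≤ A + B :=
    abs_le_of_sq_le_sq (le_of_mul_le_mul_left h3 (by positivity)) (by positivity)
  linarith [le_abs_self S]

/-! ### The discrete evolution variational inequality -/

theorem coe_toReal_of {x : EReal} (h : x ≠ ⊤) (h' : x ≠ ⊥) : ∃ a : ℝ, x = a :=
  ⟨x.toReal, (EReal.coe_toReal h h').symm⟩

theorem IsProximal.exists_real (hproper : ProperFn μ₀ F) {μ σ : Measure (Euc d)}
    (hσ : IsProximal μ₀ F τ μ σ) : ∃ e : ℝ, F σ = e := by
  obtain ⟨ρ, hρ, hF⟩ := hproper.2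
  obtain ⟨r, hr⟩ := coe_toReal_of hF (hproper.1 ρ)
  refine coe_toReal_of (fun h => ?_) (hproper.1 σ)
  have := hσ.2 ρ hρ
  rw [h, hr, EReal.coe_add_top, ← EReal.coe_add] at this
  exact EReal.coe_ne_top _ (top_le_iff.1 this)

/-- The discrete evolution variational inequality: test minimality of `σ` against the curve from
`σ` to `ρ` with base point `μ`, divide by `α` and let `α → 0`. -/
theorem discrete_evi (hμ₀ : IsProbabilityMeasure μ₀) (hlam : 0 ≤ lam)
    (hconv : GenGeoConvex μ₀ lam F) (hτ : 0 < τ) {μ σ ρ : Measure (Euc d)}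
    (hμ : μ ∈ Pfin μ₀) (hσ : IsProximal μ₀ F τ μ σ) (hρ : ρ ∈ Pfin μ₀) {e r : ℝ}
    (he : F σ = e) (hr : F ρ = r) :
    W2 σ ρ ^ 2 - W2 μ ρ ^ 2 ≤ 2 * τ * (r - e) - W2 μ σ ^ 2 := by
  obtain ⟨m, hm⟩ := exists_curve hμ₀ hlam hconv hμ hσ.1 hρ
  have key : ∀ α ∈ Set.Ioo (0 : ℝ) 1,
      (1 - α) * W2 σ ρ ^ 2 ≤ 2 * τ * (r - e) - W2 μ σ ^ 2 + W2 μ ρ ^ 2 := by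
    intro α hα
    obtain ⟨h1, h2, h3⟩ := hm α ⟨hα.1.le, hα.2.le⟩
    have h4 := (hσ.2 _ h1).trans (add_le_add_right (h3 e r he hr) _)
    rw [he] at h4
    norm_cast at h4
    have h5 : W2 μ σ ^ 2 + 2 * τ * e ≤ W2 μ (m α) ^ 2 + 2 * τ * ((1 - α) * e + α * r) := by
      have := mul_le_mul_of_nonneg_left h4 (by positivity : 0 ≤ 2 * τ)
      field_simp at this
      linarith
    refine le_of_mul_le_mul_left ?_ hα.1
    linarith
  have hlim : Tendsto (fun α : ℝ => (1 - α) * W2 σ ρ ^ 2) (nhdsWithin 0 (Set.Ioi 0))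
      (nhds ((1 - 0) * W2 σ ρ ^ 2)) :=
    (Continuous.tendsto (by fun_prop) 0).mono_left nhdsWithin_le_nhds
  have := le_of_tendsto hlim
    (Filter.eventually_of_mem (Ioo_mem_nhdsGT one_pos) key)
  linarith

/-! ### Estimates for the metric slope -/

theorem hasBasis_W2nhdsWithin (μ : Measure (Euc d)) :
    (W2nhdsWithin μ₀ μ).HasBasis (fun ε : ℝ => ε ∈ Set.Ioi (0 : ℝ))
      fun ε => {ν | ν ∈ Pfin μ₀ ∧ ν ≠ μ ∧ W2 μ ν < ε} := by
  refine Filter.hasBasis_biInf_principal ?_ ⟨1, Set.mem_Ioi.2 one_pos⟩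
  intro a ha b hb
  refine ⟨min a b, Set.mem_Ioi.2 (lt_min ha hb), ?_, ?_⟩
  · exact fun ν h => ⟨h.1, h.2.1, h.2.2.trans_le (min_le_left _ _)⟩
  · exact fun ν h => ⟨h.1, h.2.1, h.2.2.trans_le (min_le_right _ _)⟩

theorem le_slopeW {μ : Measure (Euc d)} {c : ℝ≥0∞}
    (h : ∀ ε > 0, ∃ ν ∈ Pfin μ₀, ν ≠ μ ∧ W2 μ ν < ε ∧
      c ≤ ERealPos (F μ - F ν) / ENNReal.ofReal (W2 μ ν)) : c ≤ slopeW μ₀ F μ := by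
  refine Filter.le_limsup_of_frequently_le ?_
  rw [(hasBasis_W2nhdsWithin μ).frequently_iff]
  intro ε hε
  obtain ⟨ν, h1, h2, h3, h4⟩ := h ε hε
  exact ⟨ν, ⟨h1, h2, h3⟩, h4⟩

/-- The slope is infinite at a limit of finite-energy measures whose own energy is infinite. -/
theorem slopeW_eq_top {μ : Measure (Euc d)} (hbot : ∀ ρ, F ρ ≠ ⊥)
    (hμ : μ ∈ W2Closure μ₀ (Dom μ₀ F)) (htop : F μ = ⊤) : slopeW μ₀ F μ = ⊤ := by
  obtain ⟨-, s, hs, hlim⟩ := hμ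
  refine top_le_iff.1 (le_slopeW fun ε hε => ?_)
  obtain ⟨n, hn⟩ := (hlim.eventually_lt_const hε).exists
  obtain ⟨a, ha⟩ := coe_toReal_of (hs n).2 (hbot _)
  refine ⟨s n, (hs n).1, fun h => (hs n).2 (h ▸ htop), W2_comm μ (s n) ▸ hn, ?_⟩
  rw [htop, ha, EReal.top_sub_coe, ERealPos, if_pos rfl, ENNReal.top_div_of_ne_top (by simp)]

/-- At a proximal point `σ` of `μ` the slope is at most `W₂(μ,σ)/τ`: by minimality
`F σ - F ν ≤ (W₂²(μ,ν) - W₂²(μ,σ)) / (2τ) ≤ W₂(σ,ν) (2 W₂(μ,σ) + W₂(σ,ν)) / (2τ)`. -/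
theorem slopeW_proximal_le (hμ₀ : IsProbabilityMeasure μ₀) (hlam : 0 ≤ lam)
    (hproper : ProperFn μ₀ F) (hconv : GenGeoConvex μ₀ lam F) (hτ : 0 < τ)
    {μ σ : Measure (Euc d)} (hμ : μ ∈ Pfin μ₀) (hσ : IsProximal μ₀ F τ μ σ) :
    slopeW μ₀ F σ ≤ ENNReal.ofReal (W2 μ σ / τ) := by
  obtain ⟨e, he⟩ := hσ.exists_real hproper
  have hw := W2_nonneg μ σ
  have key : ∀ ε > 0, slopeW μ₀ F σ ≤ ENNReal.ofReal (W2 μ σ / τ + ε) := by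
    intro ε hε
    refine Filter.limsup_le_of_le (by isBoundedDefault) ?_
    refine (hasBasis_W2nhdsWithin σ).eventually_iff.2
      ⟨2 * τ * ε, (by positivity : 0 < 2 * τ * ε), ?_⟩
    rintro ν ⟨h1, -, h3⟩
    have hn := W2_nonneg σ ν
    refine ENNReal.div_le_of_le_mul ?_
    rw [← ENNReal.ofReal_mul (by positivity), he]
    by_cases ht : F ν = ⊤
    · simp [ht, ERealPos]
    obtain ⟨r, hr⟩ := coe_toReal_of ht (hproper.1 ν)
    rw [hr, ← EReal.coe_sub, ERealPos, if_neg (EReal.coe_ne_top _), EReal.toReal_coe]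
    refine ENNReal.ofReal_le_ofReal ?_
    have hmin := hσ.2 ν h1
    rw [he, hr] at hmin
    norm_cast at hmin
    have htri : W2 μ ν ≤ W2 μ σ + W2 σ ν := by
      have := W2_triangle hμ₀ hlam hconv hσ.1 hμ h1
      rwa [W2_comm σ μ] at this
    have hsq : W2 μ ν ^ 2 ≤ (W2 μ σ + W2 σ ν) ^ 2 := by
      gcongr; exact W2_nonneg _ _
    have h5 : 2 * τ * (e - r) ≤ W2 μ ν ^ 2 - W2 μ σ ^ 2 := by
      have := mul_le_mul_of_nonneg_left hmin (by positivity : 0 ≤ 2 * τ)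
      field_simp at this
      linarith
    have h6 : 2 * τ * (e - r) ≤ 2 * τ * ((W2 μ σ / τ + ε) * W2 σ ν) := by
      have : 2 * τ * ((W2 μ σ / τ + ε) * W2 σ ν)
          = 2 * W2 μ σ * W2 σ ν + (2 * τ * ε) * W2 σ ν := by field_simp
      nlinarith [mul_le_mul_of_nonneg_right h3.le hn]
    exact le_of_mul_le_mul_left h6 (by positivity)
  have hlim : Tendsto (fun ε : ℝ => ENNReal.ofReal (W2 μ σ / τ + ε)) (nhdsWithin 0 (Set.Ioi 0))
      (nhds (ENNReal.ofReal (W2 μ σ / τ + 0))) :=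
    (Continuous.tendsto (ENNReal.continuous_ofReal.comp (by fun_prop)) 0).mono_left nhdsWithin_le_nhds
  have := ge_of_tendsto hlim (eventually_mem_nhdsWithin.mono key)
  rwa [add_zero] at this

/-- Convexity makes the local slope a global bound, `F μ - F ρ ≤ |∇F|(μ) W₂(μ,ρ)`: along the
geodesic from `μ` to `ρ` the difference quotient is at least `(F μ - F ρ) / W₂(μ,ρ)`. -/
theorem sub_le_slopeW (hμ₀ : IsProbabilityMeasure μ₀) (hlam : 0 ≤ lam)
    (hproper : ProperFn μ₀ F) (hlsc : W2LSC μ₀ F) (hconv : GenGeoConvex μ₀ lam F)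
    {μ ρ : Measure (Euc d)} (hμ : μ ∈ Pfin μ₀) (hρ : ρ ∈ Pfin μ₀) {e r : ℝ}
    (he : F μ = e) (hr : F ρ = r) (hfin : slopeW μ₀ F μ ≠ ⊤) :
    e - r ≤ (slopeW μ₀ F μ).toReal * W2 μ ρ := by
  have hw := W2_nonneg μ ρ
  rcases le_or_gt e r with her | her
  · exact (sub_nonpos.2 her).trans (by positivity)
  rcases hw.eq_or_lt with h0 | hpos
  · -- at distance zero, lower semicontinuity along a constant sequence gives `F μ ≤ F ρ`
    have := hlsc (fun _ => ρ) μ (fun _ => hρ) hμ (by simp [W2_comm ρ μ, ← h0])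
    rw [he, hr, liminf_const] at this
    norm_cast at this
    linarith
  have hle : ENNReal.ofReal ((e - r) / W2 μ ρ) ≤ slopeW μ₀ F μ := by
    obtain ⟨m, hm⟩ := exists_curve hμ₀ hlam hconv hμ hμ hρ
    refine le_slopeW fun ε hε => ?_
    obtain ⟨α, hα0, hα⟩ : ∃ α : ℝ, 0 < α ∧ α < min 1 (ε / W2 μ ρ) :=
      exists_between (lt_min one_pos (by positivity))
    have hα1 := (hα.trans_le (min_le_left _ _)).le
    have hαε : α * W2 μ ρ < ε := (lt_div_iff₀ hpos).1 (hα.trans_le (min_le_right _ _))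
    obtain ⟨h1, h2, h3⟩ := hm α ⟨hα0.le, hα1⟩
    have h4 := h3 e r he hr
    have hd : W2 μ (m α) ≤ α * W2 μ ρ := by
      refine le_of_sq_le_sq ?_ (by positivity)
      rw [W2_self] at h2
      nlinarith
    obtain ⟨b, hb⟩ := coe_toReal_of (ne_top_of_le_ne_top (EReal.coe_ne_top _) h4) (hproper.1 _)
    rw [hb] at h4
    norm_cast at h4
    have hdrop : α * (e - r) ≤ e - b := by linarith
    refine ⟨m α, h1, fun h => ?_, hd.trans_lt hαε, ?_⟩
    · rw [h, he] at hb
      norm_cast at hb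
      nlinarith [mul_pos hα0 (sub_pos.2 her)]
    · rw [he, hb, ← EReal.coe_sub, ERealPos, if_neg (EReal.coe_ne_top _), EReal.toReal_coe,
        ← mul_div_mul_left _ _ hα0.ne', ENNReal.ofReal_div_of_pos (by positivity)]
      exact ENNReal.div_le_div (ENNReal.ofReal_le_ofReal hdrop) (ENNReal.ofReal_le_ofReal hd)
  have := ENNReal.toReal_mono hfin hle
  rw [ENNReal.toReal_ofReal (div_nonneg (by linarith) hw)] at this
  exact (div_le_iff₀ hpos).1 this

end helpers

/-! ### The contraction -/

/-- **Contraction of the proximal map in `Λ_τ`** (Theorem 1.3, inequality (1.17)).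
If `E` is proper, coercive, lower semicontinuous and `λ`-convex along generalized
geodesics with `λ ≥ 0`, and `τ > 0`, then for all `μ, ν` in the `W₂`-closure of `D(E)`,
with proximal points `μ_τ, ν_τ`: `Λ_τ(μ_τ, ν_τ) ≤ Λ_τ(μ, ν)`. -/
theorem proximal_contraction_LamT
    {d : ℕ} (μ₀ : Measure (Euc d)) (hμ₀ : IsProbabilityMeasure μ₀)
    (F : Measure (Euc d) → EReal) (lam : ℝ) (hlam : 0 ≤ lam)
    (hproper : ProperFn μ₀ F) (hcoer : CoerciveFn μ₀ F) (hlsc : W2LSC μ₀ F)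
    (hconv : GenGeoConvex μ₀ lam F)
    (τ : ℝ) (hτ : 0 < τ)
    (μ ν : Measure (Euc d))
    (hμ : μ ∈ W2Closure μ₀ (Dom μ₀ F)) (hν : ν ∈ W2Closure μ₀ (Dom μ₀ F))
    (μτ ντ : Measure (Euc d))
    (hμτ : IsProximal μ₀ F τ μ μτ) (hντ : IsProximal μ₀ F τ ν ντ) :
    LamT μ₀ F τ μτ ντ ≤ LamT μ₀ F τ μ ν := by
  have hμP := hμ.1
  have hνP := hν.1
  have hc : ENNReal.ofReal (τ ^ 2 / 2) ≠ 0 := by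
    rw [Ne, ENNReal.ofReal_eq_zero, not_le]; positivity
  by_cases h1 : slopeW μ₀ F μ = ⊤
  · simp [LamT, h1, ENNReal.mul_top hc]
  by_cases h2 : slopeW μ₀ F ν = ⊤
  · simp [LamT, h2, ENNReal.mul_top hc]
  obtain ⟨a, ha⟩ := coe_toReal_of (fun h => h1 (slopeW_eq_top hproper.1 hμ h)) (hproper.1 μ)
  obtain ⟨b, hb⟩ := coe_toReal_of (fun h => h2 (slopeW_eq_top hproper.1 hν h)) (hproper.1 ν)
  obtain ⟨a', ha'⟩ := hμτ.exists_real hproper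
  obtain ⟨b', hb'⟩ := hντ.exists_real hproper
  -- the mixed distances cancel when the two inequalities for one ordering of `μ, ν` are added;
  -- all four together symmetrize the estimate
  have v1 := discrete_evi hμ₀ hlam hconv hτ hμP hμτ hντ.1 ha' hb'
  have v2 := discrete_evi hμ₀ hlam hconv hτ hνP hντ hμP hb' ha
  have v3 := discrete_evi hμ₀ hlam hconv hτ hνP hντ hμτ.1 hb' ha'
  have v4 := discrete_evi hμ₀ hlam hconv hτ hμP hμτ hνP ha' hb
  rw [W2_comm ντ μ, W2_comm ν μ] at v2
  rw [W2_comm ντ μτ] at v3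
  rw [W2_comm μτ ν] at v4
  have g1 := sub_le_slopeW hμ₀ hlam hproper hlsc hconv hμP hμτ.1 ha ha' h1
  have g2 := sub_le_slopeW hμ₀ hlam hproper hlsc hconv hνP hντ.1 hb hb' h2
  have s1 := slopeW_proximal_le hμ₀ hlam hproper hconv hτ hμP hμτ
  have s2 := slopeW_proximal_le hμ₀ hlam hproper hconv hτ hνP hντ
  have e1 : W2sq μτ ντ = ENNReal.ofReal (W2 μτ ντ ^ 2) := by
    rw [W2_sq, ENNReal.ofReal_toReal (W2sq_ne_top hμ₀ hμτ.1 hντ.1)]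
  have e2 : W2sq μ ν = ENNReal.ofReal (W2 μ ν ^ 2) := by
    rw [W2_sq, ENNReal.ofReal_toReal (W2sq_ne_top hμ₀ hμP hνP)]
  have hx := W2_nonneg μ μτ
  have hy := W2_nonneg ν ντ
  have hs := ENNReal.toReal_nonneg (a := slopeW μ₀ F μ)
  have ht := ENNReal.toReal_nonneg (a := slopeW μ₀ F ν)
  obtain ⟨s, hs'⟩ : ∃ s, s = (slopeW μ₀ F μ).toReal := ⟨_, rfl⟩
  obtain ⟨t, ht'⟩ : ∃ t, t = (slopeW μ₀ F ν).toReal := ⟨_, rfl⟩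
  have f1 : slopeW μ₀ F μ = ENNReal.ofReal s := by rw [hs', ENNReal.ofReal_toReal h1]
  have f2 : slopeW μ₀ F ν = ENNReal.ofReal t := by rw [ht', ENNReal.ofReal_toReal h2]
  rw [← hs'] at g1 hs
  rw [← ht'] at g2 ht
  have real_ineq : W2 μτ ντ ^ 2 + τ ^ 2 / 2 * (W2 μ μτ / τ) ^ 2 + τ ^ 2 / 2 * (W2 ν ντ / τ) ^ 2
      ≤ W2 μ ν ^ 2 + τ ^ 2 / 2 * s ^ 2 + τ ^ 2 / 2 * t ^ 2 := by
    have c1 : τ ^ 2 / 2 * (W2 μ μτ / τ) ^ 2 = W2 μ μτ ^ 2 / 2 := by field_simp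
    have c2 : τ ^ 2 / 2 * (W2 ν ντ / τ) ^ 2 = W2 ν ντ ^ 2 / 2 := by field_simp
    have y1 : τ * (a - a') ≤ τ ^ 2 / 2 * s ^ 2 + W2 μ μτ ^ 2 / 2 := by
      nlinarith [mul_le_mul_of_nonneg_left g1 hτ.le, sq_nonneg (τ * s - W2 μ μτ)]
    have y2 : τ * (b - b') ≤ τ ^ 2 / 2 * t ^ 2 + W2 ν ντ ^ 2 / 2 := by
      nlinarith [mul_le_mul_of_nonneg_left g2 hτ.le, sq_nonneg (τ * t - W2 ν ντ)]
    rw [c1, c2]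
    linarith
  have conv : ∀ w x y : ℝ, 0 ≤ x → 0 ≤ y →
      ENNReal.ofReal (w ^ 2) + ENNReal.ofReal (τ ^ 2 / 2) * ENNReal.ofReal x ^ 2
        + ENNReal.ofReal (τ ^ 2 / 2) * ENNReal.ofReal y ^ 2
      = ENNReal.ofReal (w ^ 2 + τ ^ 2 / 2 * x ^ 2 + τ ^ 2 / 2 * y ^ 2) := by
    intro w x y hx hy
    rw [← ENNReal.ofReal_pow hx, ← ENNReal.ofReal_pow hy, ← ENNReal.ofReal_mul (by positivity),
      ← ENNReal.ofReal_mul (by positivity), ← ENNReal.ofReal_add (by positivity) (by positivity),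
      ← ENNReal.ofReal_add (by positivity) (by positivity)]
  calc LamT μ₀ F τ μτ ντ
      ≤ ENNReal.ofReal (W2 μτ ντ ^ 2)
        + ENNReal.ofReal (τ ^ 2 / 2) * ENNReal.ofReal (W2 μ μτ / τ) ^ 2
        + ENNReal.ofReal (τ ^ 2 / 2) * ENNReal.ofReal (W2 ν ντ / τ) ^ 2 := by
        rw [LamT, e1]; gcongr
    _ ≤ ENNReal.ofReal (W2 μ ν ^ 2) + ENNReal.ofReal (τ ^ 2 / 2) * ENNReal.ofReal s ^ 2
        + ENNReal.ofReal (τ ^ 2 / 2) * ENNReal.ofReal t ^ 2 := by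
        rw [conv _ _ _ (by positivity) (by positivity), conv _ _ _ hs ht]
        exact ENNReal.ofReal_le_ofReal real_ineq
    _ = LamT μ₀ F τ μ ν := by rw [LamT, e2, f1, f2]
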